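/- arXiv:2110.00952 — 3 statements merged into one kernel-verified Lean document; each statement's English description precedes it below -/
import Mathlib

section
/- (Binary question: DMI-clustering equals the surprisingly popular method.) Let A ∈ ℝ^{n×2} be row-stochastic (nonnegative entries, each row sums to 1), not all rows equal, and let ā₁ = (1/n)Σᵢ A_{i1} and ā₂ = (1/n)Σᵢ A_{i2} be the column means. Then a vector p ∈ {0,1}ⁿ maximizes det([p, 1−p]ᵀ [A_{:,1} | 1]) over {0,1}ⁿ if and only if pᵢ = 1 whenever A_{i1} > ā₁ and pᵢ = 0 whenever A_{i1} < ā₁ (rows with A_{i1} = ā₁ arbitrary). Since A_{i1} > ā₁ iff A_{i2} < ā₂, DMI-clustering maps row i to cluster c exactly when A_{ic} > ā_c, which is the surprisingly popular rule. -/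
open Matrix

/-!
Since the rows of `[p, 1 - p]` sum to one, the quadratic terms in `p` cancel and the determinant
is the linear functional `∑ᵢ pᵢ (n aᵢ - ∑ₖ aₖ)`, where `a` is the first column of `A`. A sum of
functions of the separate coordinates is maximized over a product coordinate by coordinate, so a
maximizer over `{0, 1}ⁿ` is read off from the signs of the weights `n aᵢ - ∑ₖ aₖ = n (aᵢ - ā)`.
-/

open scoped BigOperators

section FiniteIndex

variable {ι : Type*} [Fintype ι]

theorem isMaxOn_sum_pi_iff {α : ι → Type*} {M : Type*} [AddCommMonoid M] [PartialOrder M]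
    [IsOrderedCancelAddMonoid M] {φ : ∀ i, α i → M} {s : ∀ i, Set (α i)} {p : ∀ i, α i}
    (hp : p ∈ Set.univ.pi s) :
    IsMaxOn (fun q ↦ ∑ i, φ i (q i)) (Set.univ.pi s) p ↔ ∀ i, IsMaxOn (φ i) (s i) (p i) := by
  classical
  simp only [isMaxOn_iff]
  refine ⟨fun h i x hx ↦ ?_, fun h q hq ↦ Finset.sum_le_sum fun i _ ↦ h i (q i) (hq i trivial)⟩
  have hmem : Function.update p i x ∈ Set.univ.pi s := by
    simpa only [Set.mem_univ_pi, Function.forall_update_iff p fun k y ↦ y ∈ s k] using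
      ⟨hx, fun k _ ↦ hp k trivial⟩
  have hle := h _ hmem
  simp only [Function.apply_update φ, Finset.sum_update_of_mem (Finset.mem_univ i)] at hle
  rw [Finset.sum_eq_add_sum_sdiff_singleton_of_mem (Finset.mem_univ i)] at hle
  exact le_of_add_le_add_right hle

theorem isMaxOn_mul_right_zero_one_iff {R : Type*} [MulZeroOneClass R] [Nontrivial R]
    [LinearOrder R] {w x : R} (hx : x ∈ ({0, 1} : Set R)) :
    IsMaxOn (· * w) {0, 1} x ↔ (0 < w → x = 1) ∧ (w < 0 → x = 0) := by
  rcases hx with rfl | rfl <;> simp [isMaxOn_iff]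

/-- The objective `det([p, 1 - p]ᵀ [a | 1])` of binary DMI-clustering, for a first answer column `a`
and a vector `p` of memberships in the first cluster. Column `0` of each matrix is the first. -/
def dmiObjective {R : Type*} [CommRing R] (a p : ι → R) : R :=
  ((of fun i (j : Fin 2) ↦ if j = 0 then p i else 1 - p i)ᵀ *
    (of fun i (j : Fin 2) ↦ if j = 0 then a i else 1)).det

theorem dmiObjective_eq_sum {R : Type*} [CommRing R] (a p : ι → R) :
    dmiObjective a p = ∑ i, p i * (Fintype.card ι * a i - ∑ k, a k) := by
  have hdet : dmiObjective a p =
      (∑ i, p i * a i) * ∑ i, (1 - p i) - (∑ i, p i) * ∑ i, (1 - p i) * a i := by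
    simp [dmiObjective, det_fin_two, mul_apply]
  have hcard : ∑ i, (1 - p i) = Fintype.card ι - ∑ i, p i := by simp
  have hcompl : ∑ i, (1 - p i) * a i = ∑ i, a i - ∑ i, p i * a i := by
    simp only [sub_mul, one_mul, Finset.sum_sub_distrib]
  calc dmiObjective a p
      = Fintype.card ι * ∑ i, p i * a i - (∑ i, p i) * ∑ k, a k := by
        rw [hdet, hcard, hcompl]; ring
    _ = ∑ i, p i * (Fintype.card ι * a i - ∑ k, a k) := by
        simp only [Finset.mul_sum _ _ (Fintype.card ι : R), Finset.sum_mul, mul_sub,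
          Finset.sum_sub_distrib, mul_left_comm]

variable {K : Type*} [Field K] [LinearOrder K] [IsStrictOrderedRing K]

theorem isMaxOn_dmiObjective_iff (a : ι → K) {p : ι → K}
    (hp : p ∈ Set.univ.pi fun _ ↦ ({0, 1} : Set K)) :
    IsMaxOn (dmiObjective a) (Set.univ.pi fun _ ↦ {0, 1}) p ↔
      (∀ i, 𝔼 k, a k < a i → p i = 1) ∧ ∀ i, a i < 𝔼 k, a k → p i = 0 := by
  have hpos (i : ι) : (0 : K) < Fintype.card ι := Nat.cast_pos.2 (Fintype.card_pos_iff.2 ⟨i⟩)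
  rw [funext (dmiObjective_eq_sum a),
    isMaxOn_sum_pi_iff (φ := fun i x ↦ x * (Fintype.card ι * a i - ∑ k, a k)) hp, ← forall_and]
  refine forall_congr' fun i ↦ ?_
  rw [isMaxOn_mul_right_zero_one_iff (hp i trivial), ← Fintype.card_mul_expect, sub_pos, sub_neg,
    mul_lt_mul_iff_right₀ (hpos i), mul_lt_mul_iff_right₀ (hpos i)]

theorem expect_lt_iff_lt_expect_of_add_eq {a b : ι → K} {c : K} (h : ∀ i, a i + b i = c) (i : ι) :
    𝔼 k, a k < a i ↔ b i < 𝔼 k, b k := by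
  have : Nonempty ι := ⟨i⟩
  have hmean : 𝔼 k, a k + 𝔼 k, b k = c := by
    simp only [← Finset.expect_add_distrib, h, Fintype.expect_const]
  constructor <;> intro <;> linarith [h i]

theorem dmi_clustering_binary_eq_surprisingly_popular_general (A : Matrix ι (Fin 2) K) {c : K}
    (hrow : ∀ i, ∑ j, A i j = c) :
    (∀ i, 𝔼 k, A k 0 < A i 0 ↔ A i 1 < 𝔼 k, A k 1) ∧
    ∀ p ∈ Set.univ.pi fun _ ↦ ({0, 1} : Set K),
      (IsMaxOn (dmiObjective fun i ↦ A i 0) (Set.univ.pi fun _ ↦ {0, 1}) p ↔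
        (∀ i, 𝔼 k, A k 0 < A i 0 → p i = 1) ∧ ∀ i, A i 0 < 𝔼 k, A k 0 → p i = 0) :=
  ⟨expect_lt_iff_lt_expect_of_add_eq fun i ↦ (Fin.sum_univ_two (A i)).symm.trans (hrow i),
    fun _ ↦ isMaxOn_dmiObjective_iff _⟩

end FiniteIndex

/-- **Binary question: DMI-clustering = surprisingly popular.** For a
row-stochastic n×2 matrix `A`, not all rows equal, with column means `ā₁ = ab 0`,
`ā₂ = ab 1`: `A_{i1} > ā₁ ↔ A_{i2} < ā₂`, and a 0-1 vector `p` maximizes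
`det([p, 1−p]ᵀ [A_{:,1} | 1])` over `{0,1}ⁿ` iff `pᵢ = 1` whenever `A_{i1} > ā₁` and
`pᵢ = 0` whenever `A_{i1} < ā₁`. -/
theorem dmi_clustering_binary_eq_surprisingly_popular (n : ℕ)
    (A : Matrix (Fin n) (Fin 2) ℝ)
    (hnn : ∀ i j, 0 ≤ A i j) (hrow : ∀ i, ∑ j, A i j = 1)
    (hne : ∃ i i' : Fin n, A i ≠ A i')
    (ab : Fin 2 → ℝ) (hab : ∀ j, ab j = (∑ i, A i j) / n)
    (f : (Fin n → ℝ) → ℝ)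
    (hf : f = fun p =>
      ((Matrix.of fun i (j : Fin 2) => if j = 0 then p i else 1 - p i)ᵀ *
       (Matrix.of fun i (j : Fin 2) => if j = 0 then A i 0 else 1)).det) :
    (∀ i, ab 0 < A i 0 ↔ A i 1 < ab 1) ∧
    (∀ p : Fin n → ℝ, (∀ i, p i = 0 ∨ p i = 1) →
      ((∀ q : Fin n → ℝ, (∀ i, q i = 0 ∨ q i = 1) → f q ≤ f p) ↔
        (∀ i, ab 0 < A i 0 → p i = 1) ∧ (∀ i, A i 0 < ab 0 → p i = 0))) := by
  obtain rfl : f = dmiObjective fun i ↦ A i 0 := hf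
  have hmean (j) : ab j = 𝔼 i, A i j := by
    rw [hab, Fintype.expect_eq_sum_div_card, Fintype.card_fin]
  simpa only [hmean, Set.mem_univ_pi, Set.mem_insert_iff, Set.mem_singleton_iff,
    isMaxOn_iff] using
    dmi_clustering_binary_eq_surprisingly_popular_general A hrow
end

section
/- Let A ∈ ℝ^{n×2}, and let C be an n×3 hard clustering matrix with nonempty clusters of sizes n₁, n₂, n₃ (n = n₁+n₂+n₃), cluster means ā₁, ā₂, ā₃ ∈ ℝ^{1×2}, and overall mean ā ∈ ℝ^{1×2}. Suppose M = Cᵀ[A | 1] is invertible and let d₁, d₂, d₃ be the columns of D = M⁻¹. Then for any λ ∈ ℝ and the point a = λā + (1−λ)ā₁: [a, 1] · d₁ = λ/n + (1−λ)/n₁, and [a, 1] · d₂ = [a, 1] · d₃ = λ/n. In particular, for λ < 1 the point a satisfies [a,1]·d₁ > [a,1]·d₂ = [a,1]·d₃ (it is assigned to cluster 1), and for λ ≥ 1 it satisfies [a,1]·d₁ ≤ [a,1]·d₂ = [a,1]·d₃; hence extending the segment from ā₁ through ā gives the partition boundary between clusters 2 and 3. -/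
/-!
The scores of a point `v` are the entries of `[v, 1] M⁻¹`, that is, the coordinates of `[v, 1]` in
the rows of `M`. Row `c` of `M` is the sum of the augmented points of cluster `c`, and `v ↦ [v, 1]`
is affine, so it commutes with taking means: `[ā_c, 1]` is `1 / n_c` times row `c`, and `[ā, 1]` is
`1 / n` times the sum of all rows. Affinity along the line through `ā_c` and `ā` then gives all
scores. Nothing about `v ↦ [v, 1]` is used except that it is affine and makes `M` invertible.
-/

open Matrix

section ClusterMatrix

variable {ι κ μ R : Type*} [DecidableEq κ]

/-- The hard clustering matrix of the assignment `g` of indices to clusters. -/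
def clusterMatrix (R : Type*) [Zero R] [One R] (g : ι → κ) : Matrix ι κ R :=
  of fun i c => if g i = c then 1 else 0

variable [Fintype ι] [NonAssocSemiring R]

theorem row_transpose_clusterMatrix_mul (g : ι → κ) (X : ι → μ → R) (c : κ) :
    ((clusterMatrix R g)ᵀ * of X).row c = ∑ i with g i = c, X i := by
  ext j
  simp only [clusterMatrix, row_apply, mul_apply, transpose_apply, of_apply, ite_mul, one_mul,
    zero_mul, Finset.sum_filter, Finset.sum_apply]

theorem one_vecMul_transpose_clusterMatrix_mul [Fintype κ] (g : ι → κ) (X : ι → μ → R) :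
    1 ᵥ* ((clusterMatrix R g)ᵀ * of X) = ∑ i, X i :=
  calc
    1 ᵥ* ((clusterMatrix R g)ᵀ * of X) = ∑ c, ((clusterMatrix R g)ᵀ * of X).row c := one_vecMul _
    _ = ∑ c, ∑ i with g i = c, X i := by simp only [row_transpose_clusterMatrix_mul]
    _ = ∑ i, X i := Finset.sum_fiberwise _ _ _

end ClusterMatrix

section Centroid

variable {ι K V W P : Type*} [DivisionRing K] [CharZero K] [AddCommGroup V] [Module K V]
  [AddTorsor V P] [AddCommGroup W] [Module K W]

theorem map_centroid_eq_inv_card_smul_sum (φ : P →ᵃ[K] W) {s : Finset ι} (hs : s.Nonempty)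
    (x : ι → P) : φ (s.centroid K x) = (s.card : K)⁻¹ • ∑ i ∈ s, φ (x i) := by
  have hw := s.sum_centroidWeights_eq_one_of_nonempty K hs
  rw [Finset.centroid_def, s.map_affineCombination x _ hw,
    s.affineCombination_eq_linear_combination _ _ hw, Finset.smul_sum]
  rfl

theorem centroid_eq_inv_card_smul_sum {s : Finset ι} (hs : s.Nonempty) (x : ι → W) :
    s.centroid K x = (s.card : K)⁻¹ • ∑ i ∈ s, x i :=
  map_centroid_eq_inv_card_smul_sum (AffineMap.id K W) hs x

end Centroid

section PartitionScore

open Finset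

variable {ι κ K V P : Type*} [Fintype ι] [Fintype κ] [DecidableEq κ] [Field K]
  [AddCommGroup V] [Module K V] [AddTorsor V P] {φ : P →ᵃ[K] (κ → K)} {x : ι → P} {g : ι → κ}

/-- The matrix `M = Cᵀ[A | 1]` of the points `x` clustered by `g`, with an arbitrary affine map `φ`
in the role of `v ↦ [v, 1]`. -/
def clusterSumMatrix (φ : P →ᵃ[K] (κ → K)) (x : ι → P) (g : ι → κ) : Matrix κ κ K :=
  (clusterMatrix K g)ᵀ * of fun i => φ (x i)

/-- The scores `c ↦ [v, 1] · d_c`, where `d_c` is column `c` of `M⁻¹`; the point `v` is assigned to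
the cluster of largest score. -/
noncomputable def partitionScore (φ : P →ᵃ[K] (κ → K)) (x : ι → P) (g : ι → κ) (v : P) : κ → K :=
  φ v ᵥ* (clusterSumMatrix φ x g)⁻¹

theorem cluster_nonempty_of_isUnit (hM : IsUnit (clusterSumMatrix φ x g)) (c : κ) :
    Finset.Nonempty {i | g i = c} := by
  by_contra hempty
  have hrow : (clusterSumMatrix φ x g).row c = 0 := by
    rw [clusterSumMatrix, row_transpose_clusterMatrix_mul,
      not_nonempty_iff_eq_empty.mp hempty, sum_empty]
  exact (linearIndependent_rows_iff_isUnit.mpr hM).ne_zero c hrow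

theorem partitionScore_eq_of_eq_vecMul (hM : IsUnit (clusterSumMatrix φ x g)) {v : P} {w : κ → K}
    (hw : φ v = w ᵥ* clusterSumMatrix φ x g) : partitionScore φ x g v = w := by
  rw [partitionScore, hw, vecMul_vecMul,
    mul_nonsing_inv _ ((isUnit_iff_isUnit_det _).mp hM), vecMul_one]

theorem map_centroid_cluster [CharZero K] (φ : P →ᵃ[K] (κ → K)) (x : ι → P) {g : ι → κ} {c : κ}
    (hc : Finset.Nonempty {i | g i = c}) :
    φ (centroid K {i | g i = c} x) =
      Pi.single c (#{i | g i = c} : K)⁻¹ ᵥ* clusterSumMatrix φ x g := by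
  rw [map_centroid_eq_inv_card_smul_sum φ hc, single_vecMul, clusterSumMatrix,
    row_transpose_clusterMatrix_mul]

theorem map_centroid_univ [CharZero K] [Nonempty ι] (φ : P →ᵃ[K] (κ → K)) (x : ι → P)
    (g : ι → κ) :
    φ (centroid K univ x) = ((Fintype.card ι : K)⁻¹ • 1) ᵥ* clusterSumMatrix φ x g := by
  rw [map_centroid_eq_inv_card_smul_sum φ univ_nonempty, card_univ, smul_vecMul,
    clusterSumMatrix, one_vecMul_transpose_clusterMatrix_mul]

theorem partitionScore_lineMap_centroid [CharZero K] (hM : IsUnit (clusterSumMatrix φ x g))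
    (c : κ) (t : K) :
    partitionScore φ x g
        (AffineMap.lineMap (centroid K {i | g i = c} x) (centroid K univ x) t) =
      (1 - t) • Pi.single c (#{i | g i = c} : K)⁻¹ + t • (Fintype.card ι : K)⁻¹ • 1 := by
  have hc := cluster_nonempty_of_isUnit hM c
  have : Nonempty ι := hc.to_type
  apply partitionScore_eq_of_eq_vecMul hM
  rw [AffineMap.apply_lineMap, AffineMap.lineMap_apply_module, map_centroid_cluster φ x hc,
    map_centroid_univ φ x g, add_vecMul, smul_vecMul (1 - t), smul_vecMul t]

theorem partition_line_cluster_one_general [LinearOrder K] [IsStrictOrderedRing K]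
    (hM : IsUnit (clusterSumMatrix φ x g)) (c : κ) (t : K) {a : P}
    (ha : a = AffineMap.lineMap (centroid K {i | g i = c} x) (centroid K univ x) t) :
    partitionScore φ x g a c = t / Fintype.card ι + (1 - t) / #{i | g i = c} ∧
      ∀ c' ≠ c, partitionScore φ x g a c' = t / Fintype.card ι ∧
        (partitionScore φ x g a c' < partitionScore φ x g a c ↔ t < 1) := by
  have hscore := partitionScore_lineMap_centroid hM c t
  rw [← ha] at hscore
  have hself : partitionScore φ x g a c = t / Fintype.card ι + (1 - t) / #{i | g i = c} := by
    simp [hscore, div_eq_mul_inv, add_comm]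
  refine ⟨hself, fun c' hne => ?_⟩
  have hother : partitionScore φ x g a c' = t / Fintype.card ι := by
    simp [hscore, div_eq_mul_inv, hne]
  have hcard : (0 : K) < #{i | g i = c} :=
    Nat.cast_pos.mpr (cluster_nonempty_of_isUnit hM c).card_pos
  refine ⟨hother, ?_⟩
  rw [hself, hother, lt_add_iff_pos_right, div_pos_iff_of_pos_right hcard, sub_pos]

end PartitionScore

/-- The affine map `v ↦ [v, 1]` that carries points to the rows of `[A | 1]`. -/
def homogenize (R : Type*) [Ring R] (d : ℕ) : (Fin d → R) →ᵃ[R] (Fin (d + 1) → R) where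
  toFun v := Fin.snoc (α := fun _ => R) v 1
  linear :=
    { toFun v := Fin.snoc (α := fun _ => R) v 0
      map_add' u v := by ext j; cases j using Fin.lastCases <;> simp
      map_smul' r v := by ext j; cases j using Fin.lastCases <;> simp }
  map_vadd' u v := by ext j; cases j using Fin.lastCases <;> simp

/-- For `A ∈ ℝ^{n×2}`, a hard clustering into 3 nonempty clusters with
sizes `nc`, cluster-1 mean `ā₁`, overall mean `ā`, and `M = Cᵀ[A|1]` invertible with
inverse columns `d₁, d₂, d₃`: for `a = λ ā + (1−λ) ā₁`, `[a,1]·d₁ = λ/n + (1−λ)/n₁` and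
`[a,1]·d₂ = [a,1]·d₃ = λ/n`; for `λ < 1` the point is assigned to cluster 1
(`[a,1]·d₂ < [a,1]·d₁`) and for `λ ≥ 1`, `[a,1]·d₁ ≤ [a,1]·d₂`. -/
theorem partition_line_cluster_one (n : ℕ) (A : Matrix (Fin n) (Fin 2) ℝ)
    (g : Fin n → Fin 3) (hnonempty : ∀ c, ∃ i, g i = c)
    (C : Matrix (Fin n) (Fin 3) ℝ)
    (hC : C = fun i c => if g i = c then 1 else 0)
    (augA : Matrix (Fin n) (Fin 3) ℝ)
    (haug : augA = fun i (j : Fin 3) => if h : (j : ℕ) < 2 then A i ⟨j, h⟩ else 1)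
    (M : Matrix (Fin 3) (Fin 3) ℝ) (hM : M = Cᵀ * augA) (hMinv : IsUnit M)
    (nc : Fin 3 → ℕ) (hnc : ∀ c, nc c = (Finset.univ.filter fun i => g i = c).card)
    (abar : Fin 2 → ℝ) (habar : ∀ j, abar j = (∑ i, A i j) / n)
    (abar1 : Fin 2 → ℝ)
    (habar1 : ∀ j, abar1 j = (∑ i ∈ Finset.univ.filter fun i => g i = 0, A i j) / nc 0)
    (lam : ℝ) (a : Fin 2 → ℝ)
    (ha : a = fun j => lam * abar j + (1 - lam) * abar1 j)
    (ext : Fin 3 → ℝ)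
    (hext : ext = fun (j : Fin 3) => if h : (j : ℕ) < 2 then a ⟨j, h⟩ else 1) :
    (∑ r, ext r * M⁻¹ r 0 = lam / n + (1 - lam) / nc 0) ∧
    (∑ r, ext r * M⁻¹ r 1 = lam / n) ∧
    (∑ r, ext r * M⁻¹ r 2 = lam / n) ∧
    (lam < 1 → ∑ r, ext r * M⁻¹ r 1 < ∑ r, ext r * M⁻¹ r 0) ∧
    (1 ≤ lam → ∑ r, ext r * M⁻¹ r 0 ≤ ∑ r, ext r * M⁻¹ r 1) := by
  obtain ⟨i, hi⟩ := hnonempty 0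
  have hcluster : Finset.Nonempty {i | g i = 0} := ⟨i, by simp [hi]⟩
  have hmatrix : M = clusterSumMatrix (homogenize ℝ 2) A.row g := by
    rw [hM, hC, haug]
    rfl
  have hscore : ∀ c, ∑ r, ext r * M⁻¹ r c = partitionScore (homogenize ℝ 2) A.row g a c := by
    rw [hmatrix, hext]
    exact fun _ => rfl
  have hline : a = AffineMap.lineMap (Finset.centroid ℝ {i | g i = 0} A.row)
      (Finset.univ.centroid ℝ A.row) lam := by
    ext j
    rw [AffineMap.lineMap_apply_module, centroid_eq_inv_card_smul_sum hcluster A.row,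
      centroid_eq_inv_card_smul_sum ⟨i, Finset.mem_univ i⟩ A.row]
    simp [ha, habar, habar1, hnc, div_eq_inv_mul, add_comm]
  have hresult := partition_line_cluster_one_general (hmatrix ▸ hMinv) 0 lam hline
  simp only [← hscore, ← hnc, Fintype.card_fin] at hresult
  obtain ⟨hself, hother⟩ := hresult
  obtain ⟨hone, hlt⟩ := hother 1 (by decide)
  exact ⟨hself, hone, (hother 2 (by decide)).1, hlt.mpr, fun h => not_lt.mp (mt hlt.mp h.not_gt)⟩
end

section
/- (DMI-clustering = 'rotated' surprisingly popular.) Let A ∈ ℝ^{n×C} be row-stochastic (nonnegative entries, each row sums to 1) with every column sum positive, and let ncol(A) be A with each column divided by its column sum. Then the all-ones vector 1ₙ is a linear combination of the columns of ncol(A) (namely 1ₙ = Σ_c s_c · ncol(A)_{:,c}, where s_c is the c-th column sum of A). Consequently, if ncol(A) has rank C, then rank([A | 1]) = C and the columns of ncol(A) form a valid choice of C linearly independent columns of [A | 1] up to invertible column operations; hence for any hard clustering matrix C* that maximizes |det(Mᵀ ncol(A))| over hard clustering matrices M with |det(C*ᵀ ncol(A))| > 0, setting D = (C*ᵀ ncol(A))⁻¹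 (normalized so the determinant is positive) gives C* ∈ idxmax(ncol(A) · D). By contrast, the surprisingly popular method outputs idxmax(ncol(A)) itself, so DMI-clustering is the surprisingly popular rule applied after the right-multiplication ('rotation') by D. -/
open Matrix

/-! Reassigning a single task `i` from cluster `g i` to cluster `c` changes `M = C*ᵀ N` by the
rank-one matrix `(e_c - e_{g i}) ⊗ (row i of N)`, so by the matrix determinant lemma it multiplies
`det M` by `1 + (N M⁻¹)_{i,c} - (N M⁻¹)_{i,g i}`. If no such move increases `|det M|`, this factor
is at most `1`, which says that `g i` maximizes row `i` of `N M⁻¹`.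

The rank of `[A | 1]` equals that of `ncol(A)` because `1 = A 1` lies in the column space of `A`,
which rescaling the columns by nonzero factors does not change. -/

section AugmentedRank

variable {m n k R : Type*} [Fintype n] [Fintype k] [CommRing R]

lemma rank_fromCols_mul_right (A : Matrix m n R) (X : Matrix n k R) :
    (fromCols A (A * X)).rank = A.rank := by
  classical
  nontriviality R
  have factor_left : fromCols A (A * X) = A * fromCols 1 X := by
    rw [mul_fromCols, Matrix.mul_one]
  have factor_right : A = fromCols A (A * X) * (fromRows 1 0 : Matrix (n ⊕ k) n R) := by
    rw [fromCols_mul_fromRows, Matrix.mul_one, Matrix.mul_zero, add_zero]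
  apply le_antisymm
  · rw [factor_left]
    exact rank_mul_le_left _ _
  · conv_lhs => rw [factor_right]
    exact rank_mul_le_left _ _

lemma rank_fromCols_replicateCol_one {A : Matrix m n R} (hA : ∀ i, ∑ c, A i c = 1) :
    (fromCols A (replicateCol k (1 : m → R))).rank = A.rank := by
  have ones_eq : A * replicateCol k (1 : n → R) = replicateCol k 1 := by
    ext i j
    simp [Matrix.mul_apply, hA]
  rw [← rank_fromCols_mul_right A (replicateCol k 1), ones_eq]

lemma rank_dite_lt_one_eq_rank_fromCols {C : ℕ} (A : Matrix m (Fin C) R) :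
    (of fun i (j : Fin (C + 1)) => if h : (j : ℕ) < C then A i ⟨j, h⟩ else 1).rank =
      (fromCols A (replicateCol (Fin 1) 1)).rank := by
  rw [← rank_submatrix (fromCols A (replicateCol (Fin 1) 1)) (Equiv.refl m) finSumFinEquiv.symm]
  congr 1
  ext i j
  refine Fin.lastCases ?_ (fun c => ?_) j <;> simp

end AugmentedRank

lemma rank_div_columns {m n K : Type*} [Fintype n] [Field K] (A : Matrix m n K)
    {w : n → K} (hw : ∀ c, w c ≠ 0) :
    (of fun i c => A i c / w c).rank = A.rank := by
  classical
  have hdet : (diagonal w).det ≠ 0 := by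
    rw [det_diagonal]
    exact Finset.prod_ne_zero_iff.mpr fun c _ => hw c
  rw [← rank_mul_eq_left_of_det_ne_zero (diagonal w) _ hdet]
  congr 1
  ext i c
  rw [mul_diagonal, of_apply, div_mul_cancel₀ _ (hw c)]

lemma det_add_vecMulVec {n R : Type*} [Fintype n] [DecidableEq n] [CommRing R]
    {M : Matrix n n R} (hM : IsUnit M.det) (u v : n → R) :
    (M + vecMulVec u v).det = M.det * (1 + v ᵥ* M⁻¹ ⬝ᵥ u) := by
  rw [vecMulVec_eq Unit, det_add_replicateCol_mul_replicateRow hM, det_unique (n := Unit),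
    ← replicateRow_vecMul]
  simp [Matrix.mul_apply, dotProduct]

/-- The hard clustering matrix of an assignment `g` of tasks to clusters: row `i` is one-hot at
`g i`. Every hard clustering matrix has this form for a unique `g`. -/
def hardClustering {m n : Type*} (R : Type*) [DecidableEq n] [Zero R] [One R] (g : m → n) :
    Matrix m n R :=
  of fun i c => if g i = c then 1 else 0

/-- `IsRowArgmax M g` says that `g` picks a largest entry in every row of `M`, i.e. that the hard
clustering matrix of `g` belongs to `idxmax(M)`. -/
def IsRowArgmax {m n R : Type*} [LE R] (M : Matrix m n R) (g : m → n) : Prop :=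
  ∀ i c, M i c ≤ M i (g i)

section Clustering

variable {m n R : Type*} [DecidableEq m] [DecidableEq n]

lemma hardClustering_update [Ring R] (g : m → n) (i : m) (c : n) :
    hardClustering R (Function.update g i c) =
      hardClustering R g + vecMulVec (Pi.single i 1) (Pi.single c 1 - Pi.single (g i) 1) := by
  ext k d
  rcases eq_or_ne k i with rfl | hk
  · simp [hardClustering, vecMulVec_apply, Pi.single_apply, eq_comm]
  · simp [hardClustering, vecMulVec_apply, hk]

variable [Fintype m]

lemma transpose_hardClustering_update_mul [CommRing R] (N : Matrix m n R) (g : m → n)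
    (i : m) (c : n) :
    (hardClustering R (Function.update g i c))ᵀ * N =
      (hardClustering R g)ᵀ * N + vecMulVec (Pi.single c 1 - Pi.single (g i) 1) (N i) := by
  rw [hardClustering_update, transpose_add, Matrix.add_mul, transpose_vecMulVec, vecMulVec_mul,
    single_one_vecMul, row_def]

variable [Fintype n]

lemma det_transpose_hardClustering_update_mul [CommRing R] {N : Matrix m n R} {g : m → n}
    (hdet : IsUnit ((hardClustering R g)ᵀ * N).det) (i : m) (c : n) :
    ((hardClustering R (Function.update g i c))ᵀ * N).det =
      ((hardClustering R g)ᵀ * N).det *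
        (1 + ((N * ((hardClustering R g)ᵀ * N)⁻¹) i c -
          (N * ((hardClustering R g)ᵀ * N)⁻¹) i (g i))) := by
  rw [transpose_hardClustering_update_mul, det_add_vecMulVec hdet, dotProduct_sub,
    dotProduct_single_one, dotProduct_single_one, mul_apply_eq_vecMul]

lemma isRowArgmax_mul_inv_of_abs_det_update_le [CommRing R] [LinearOrder R]
    [IsStrictOrderedRing R] {N : Matrix m n R} {g : m → n}
    (hdet : IsUnit ((hardClustering R g)ᵀ * N).det)
    (hmax : ∀ i c, |((hardClustering R (Function.update g i c))ᵀ * N).det| ≤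
      |((hardClustering R g)ᵀ * N).det|) :
    IsRowArgmax (N * ((hardClustering R g)ᵀ * N)⁻¹) g := by
  intro i c
  have hfactor := hmax i c
  rw [det_transpose_hardClustering_update_mul hdet, abs_mul,
    mul_le_iff_le_one_right (abs_pos.mpr hdet.ne_zero)] at hfactor
  linarith [le_of_abs_le hfactor]

end Clustering

theorem dmi_clustering_rotated_surprisingly_popular_general {m n k K : Type*}
    [Fintype m] [DecidableEq m] [Fintype n] [DecidableEq n] [Fintype k]
    [Field K] [LinearOrder K] [IsStrictOrderedRing K]
    {A : Matrix m n K} (hrow : ∀ i, ∑ c, A i c = 1) {w : n → K} (hw : ∀ c, w c ≠ 0)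
    {N : Matrix m n K} (hN : N = of fun i c => A i c / w c) :
    (∀ i, 1 = ∑ c, w c * N i c) ∧
    (fromCols A (replicateCol k 1)).rank = N.rank ∧
    ∀ g : m → n, ((hardClustering K g)ᵀ * N).det ≠ 0 →
      (∀ i c, |((hardClustering K (Function.update g i c))ᵀ * N).det| ≤
        |((hardClustering K g)ᵀ * N).det|) →
      IsRowArgmax (N * ((hardClustering K g)ᵀ * N)⁻¹) g := by
  refine ⟨fun i => ?_, ?_, fun g hdet => isRowArgmax_mul_inv_of_abs_det_update_le hdet.isUnit⟩
  · simp only [hN, of_apply, mul_div_cancel₀ _ (hw _), hrow]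
  · rw [rank_fromCols_replicateCol_one hrow, hN, rank_div_columns A hw]

/-- **DMI-clustering = 'rotated' surprisingly popular.** For a row-stochastic
n×C matrix `A` with positive column sums `s`, and `ncolA` the column-normalization of `A`:
(1) the all-ones vector is the combination `Σ_c s_c · ncolA_{:,c}` of the columns of `ncolA`;
(2) if `ncolA` has rank `C` then `rank [A | 1] = C`;
(3) for any hard clustering matrix `C*` (assignment `g`) with `det(C*ᵀ ncolA) > 0` which
maximizes `|det(Mᵀ ncolA)|` over hard clustering matrices, setting `D = (C*ᵀ ncolA)⁻¹`,
we have `C* ∈ idxmax(ncolA · D)`, i.e. for each row `i`, column `g i` of `ncolA · D` attains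
the row maximum. -/
theorem dmi_clustering_rotated_surprisingly_popular (n C : ℕ)
    (A : Matrix (Fin n) (Fin C) ℝ)
    (hnn : ∀ i c, 0 ≤ A i c) (hrow : ∀ i, ∑ c, A i c = 1)
    (s : Fin C → ℝ) (hs : ∀ c, s c = ∑ i, A i c) (hspos : ∀ c, 0 < s c)
    (ncolA : Matrix (Fin n) (Fin C) ℝ) (hncol : ncolA = fun i c => A i c / s c)
    (augA : Matrix (Fin n) (Fin (C + 1)) ℝ)
    (haug : augA = fun i (j : Fin (C + 1)) => if h : (j : ℕ) < C then A i ⟨j, h⟩ else 1) :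
    (∀ i, (1 : ℝ) = ∑ c, s c * ncolA i c) ∧
    (ncolA.rank = C → augA.rank = C) ∧
    (∀ g : Fin n → Fin C, ∀ Cstar : Matrix (Fin n) (Fin C) ℝ,
      Cstar = (fun i c => if g i = c then 1 else 0) →
      0 < (Cstarᵀ * ncolA).det →
      (∀ g' : Fin n → Fin C,
        |(((fun i c => if g' i = c then (1 : ℝ) else 0) :
            Matrix (Fin n) (Fin C) ℝ)ᵀ * ncolA).det| ≤ |(Cstarᵀ * ncolA).det|) →
      ∀ i c, (ncolA * (Cstarᵀ * ncolA)⁻¹) i c ≤ (ncolA * (Cstarᵀ * ncolA)⁻¹) i (g i)) := by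
  obtain ⟨hone, hrank, hargmax⟩ :=
    dmi_clustering_rotated_surprisingly_popular_general (k := Fin 1) hrow (fun c => (hspos c).ne')
      hncol
  refine ⟨hone, fun h => haug ▸ (rank_dite_lt_one_eq_rank_fromCols A).trans (hrank.trans h), ?_⟩
  rintro g _ rfl hdet hmax
  exact hargmax g hdet.ne' fun i c => hmax (Function.update g i c)
end
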